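/- A graph contains no K_{3,3} immersion if and only if it can be obtained from internally 4-edge-connected K_{3,3}-immersion-free graphs by repeatedly applying: joins on vertices of degree at most three, disjoint unions, subdividing edges, and adding pendant vertices joined by single or double edges. -/

import Mathlib

/-!
An immersion of an internally 4-edge-connected graph `H` cannot split `V(H)` across a cut with at
most two edges, and a cut with three edges isolates at most one vertex of it. Each operation creates
such a small cut, and projecting one side of the cut to a point carries the immersion over to one of
the graphs that were combined.

Conversely, induct on the number of vertices. A graph that is not internally 4-edge-connected has a
smallest cut with at most three edges, which exhibits it as a disjoint union, a pendant extension, a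
subdivision or a join. Contracting one side of the cut yields a graph immersed in the original one:
by minimality that side is connected, and the at most three edges of the cut can be continued inside
it along edge-disjoint routes to a common vertex.
-/

/-- A finite multigraph without loops: vertices `V`, edges `E`,
each edge has an unordered pair of distinct endpoints. -/
structure Multigraph where
  V : Type
  E : Type
  [fV : Fintype V]
  [fE : Fintype E]
  [dV : DecidableEq V]
  [dE : DecidableEq E]
  ends : E → Sym2 V
  noLoop : ∀ e, ¬ (ends e).IsDiag

attribute [instance] Multigraph.fV Multigraph.fE Multigraph.dV Multigraph.dE

namespace Multigraph

/-- Walks in a multigraph. -/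
inductive Walk (G : Multigraph) : G.V → G.V → Type
  | nil (v : G.V) : Walk G v v
  | cons {u v w : G.V} (e : G.E) (h : G.ends e = s(u, v)) (p : Walk G v w) : Walk G u w

/-- The list of edges traversed by a walk. -/
def Walk.edges {G : Multigraph} : {u v : G.V} → G.Walk u v → List G.E
  | _, _, .nil _ => []
  | _, _, .cons e _ p => e :: p.edges

/-- The list of vertices visited by a walk. -/
def Walk.support {G : Multigraph} : {u v : G.V} → G.Walk u v → List G.V
  | u, _, .nil _ => [u]
  | u, _, .cons _ _ p => u :: p.support

/-- A walk is a path if it visits no vertex twice. -/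
def Walk.IsPath {G : Multigraph} {u v : G.V} (p : G.Walk u v) : Prop := p.support.Nodup

/-- Data of an immersion of `H` into `G`: an injective map on vertices and,
for each edge of `H`, a path in `G` joining the images of its endpoints,
the paths being pairwise edge-disjoint. -/
structure ImmersionData (H G : Multigraph) where
  vmap : H.V → G.V
  inj : Function.Injective vmap
  pstart : H.E → G.V
  pend : H.E → G.V
  walk : ∀ e, G.Walk (pstart e) (pend e)
  ends_eq : ∀ e, s(pstart e, pend e) = (H.ends e).map vmap
  isPath : ∀ e, (walk e).IsPath
  edgeDisj : ∀ e e', e ≠ e' → List.Disjoint (walk e).edges (walk e').edges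

/-- `H` immerses in `G`. -/
def Immerses (H G : Multigraph) : Prop := Nonempty (ImmersionData H G)

/-- Data witnessing that `G` contains a subdivision of `H` as a subgraph
(i.e. `H` is a topological minor of `G`): as an immersion, but moreover the
paths may only meet at images of common endpoints. -/
structure SubdivisionData (H G : Multigraph) extends ImmersionData H G where
  vtxDisj : ∀ e e', e ≠ e' → ∀ x, x ∈ (walk e).support → x ∈ (walk e').support →
    ∃ w, x = vmap w ∧ w ∈ H.ends e ∧ w ∈ H.ends e'

/-- `G` contains a subdivision of `H` as a subgraph. -/
def ContainsSubdivision (H G : Multigraph) : Prop := Nonempty (SubdivisionData H G)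

/-- The complete bipartite graph `K_{3,3}`. -/
def K33 : Multigraph where
  V := Fin 3 ⊕ Fin 3
  E := Fin 3 × Fin 3
  ends e := s(Sum.inl e.1, Sum.inr e.2)
  noLoop e := by simp [Sym2.mk_isDiag_iff]

/-- The complete graph `K_5`. -/
def K5 : Multigraph where
  V := Fin 5
  E := {p : Fin 5 × Fin 5 // p.1 < p.2}
  ends e := s(e.1.1, e.1.2)
  noLoop e := by simpa [Sym2.mk_isDiag_iff] using e.2.ne

variable (G : Multigraph)

/-- The degree of a vertex: the number of incident edges. -/
def deg (v : G.V) : ℕ := (Finset.univ.filter fun e => v ∈ G.ends e).card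

/-- The multiplicity of the (possible) edge between `u` and `v`. -/
def mult (u v : G.V) : ℕ := (Finset.univ.filter fun e => G.ends e = s(u, v)).card

/-- The edge cut determined by a set `A` of vertices. -/
def cut (A : Finset G.V) : Finset G.E :=
  Finset.univ.filter fun e => ∃ u ∈ A, ∃ v ∈ Aᶜ, G.ends e = s(u, v)

/-- Every edge cut of `G` has at least `k` edges. -/
def EdgeConnGe (k : ℕ) : Prop :=
  ∀ A : Finset G.V, A.Nonempty → A ≠ Finset.univ → k ≤ (G.cut A).card

/-- Internally 4-edge-connected: 3-edge-connected and every 3-edge cut has a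
side consisting of a single vertex. -/
def Internally4EC : Prop :=
  G.EdgeConnGe 3 ∧ ∀ A : Finset G.V, A.Nonempty → A ≠ Finset.univ →
    (G.cut A).card = 3 → A.card = 1 ∨ Aᶜ.card = 1

/-- Weakly 5-edge-connected: internally 4-edge-connected and every 4-edge cut
has a side with at most two vertices. -/
def Weakly5EC : Prop :=
  G.Internally4EC ∧ ∀ A : Finset G.V, A.Nonempty → A ≠ Finset.univ →
    (G.cut A).card = 4 → A.card ≤ 2 ∨ Aᶜ.card ≤ 2

/-- `G` is `d`-regular. -/
def IsRegular (d : ℕ) : Prop := ∀ v, G.deg v = d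

/-- `G` is connected. -/
def Connected : Prop := ∀ u v : G.V, Nonempty (G.Walk u v)

/-- `v` is a cut-vertex: the remaining vertices split into two nonempty parts
with no edge between them. -/
def IsCutVertex (v : G.V) : Prop :=
  ∃ C D : Finset G.V, C.Nonempty ∧ D.Nonempty ∧ Disjoint C D ∧ v ∉ C ∧ v ∉ D ∧
    (∀ x : G.V, x ∈ C ∪ D ∨ x = v) ∧
    ∀ e : G.E, ¬ ∃ u ∈ C, ∃ w ∈ D, G.ends e = s(u, w)

/-- `G` is 2-connected. -/
def TwoConnected : Prop :=
  G.Connected ∧ 3 ≤ Fintype.card G.V ∧ ∀ v, ¬ G.IsCutVertex v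

/-- Planarity, via Kuratowski's characterization: no subdivision of `K_5`
nor of `K_{3,3}` as a subgraph. -/
def Planar : Prop := ¬ ContainsSubdivision K5 G ∧ ¬ ContainsSubdivision K33 G

end Multigraph

lemma Sym2.isDiag_map_iff' {α β : Type*} {f : α → β} (hf : Function.Injective f)
    (s : Sym2 α) : (s.map f).IsDiag ↔ s.IsDiag := by
  induction s using Sym2.ind with
  | _ x y => simp [Sym2.mk_isDiag_iff, hf.eq_iff]

namespace Multigraph

/-- The join of `H1` and `H2` on vertices `v1` and `v2`: remove `v1` and `v2`
and match up their incident edges via the bijection `π`, joining the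
corresponding other endpoints. -/
def joinGraph (H1 H2 : Multigraph) (v1 : H1.V) (v2 : H2.V)
    (π : {e : H1.E // v1 ∈ H1.ends e} ≃ {e : H2.E // v2 ∈ H2.ends e}) :
    Multigraph where
  V := {x : H1.V // x ≠ v1} ⊕ {x : H2.V // x ≠ v2}
  E := {e : H1.E // v1 ∉ H1.ends e} ⊕ {e : H2.E // v2 ∉ H2.ends e}
       ⊕ {e : H1.E // v1 ∈ H1.ends e}
  ends e := match e with
    | .inl e => ((H1.ends e.1).attachWith (P := fun x => x ≠ v1)
        (fun _ hx hEq => e.2 (hEq ▸ hx))).map Sum.inl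
    | .inr (.inl e) => ((H2.ends e.1).attachWith (P := fun x => x ≠ v2)
        (fun _ hx hEq => e.2 (hEq ▸ hx))).map Sum.inr
    | .inr (.inr e) =>
        s(Sum.inl ⟨Sym2.Mem.other' e.2, fun hEq => H1.noLoop e.1
            (by rw [← Sym2.other_spec' e.2, hEq]; exact Sym2.mk_isDiag_iff.mpr rfl)⟩,
          Sum.inr ⟨Sym2.Mem.other' (π e).2, fun hEq => H2.noLoop (π e).1
            (by rw [← Sym2.other_spec' (π e).2, hEq]; exact Sym2.mk_isDiag_iff.mpr rfl)⟩)
  noLoop e := match e with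
    | .inl e => by
        intro hd
        apply H1.noLoop e.1
        rw [← Sym2.attachWith_map_subtypeVal (s := H1.ends e.1) (P := fun x => x ≠ v1) (fun _ hx hEq => e.2 (hEq ▸ hx))]
        exact (Sym2.isDiag_map_iff' Subtype.val_injective _).mpr
          ((Sym2.isDiag_map_iff' Sum.inl_injective _).mp hd)
    | .inr (.inl e) => by
        intro hd
        apply H2.noLoop e.1
        rw [← Sym2.attachWith_map_subtypeVal (s := H2.ends e.1) (P := fun x => x ≠ v2) (fun _ hx hEq => e.2 (hEq ▸ hx))]
        exact (Sym2.isDiag_map_iff' Subtype.val_injective _).mpr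
          ((Sym2.isDiag_map_iff' Sum.inr_injective _).mp hd)
    | .inr (.inr e) => by simp [Sym2.mk_isDiag_iff]

end Multigraph

namespace Multigraph

/-- Disjoint union of two multigraphs. -/
def disjUnion (G1 G2 : Multigraph) : Multigraph where
  V := G1.V ⊕ G2.V
  E := G1.E ⊕ G2.E
  ends e := match e with
    | .inl e => (G1.ends e).map Sum.inl
    | .inr e => (G2.ends e).map Sum.inr
  noLoop e := match e with
    | .inl e => fun hd => G1.noLoop e ((Sym2.isDiag_map_iff' Sum.inl_injective _).mp hd)
    | .inr e => fun hd => G2.noLoop e ((Sym2.isDiag_map_iff' Sum.inr_injective _).mp hd)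

/-- Subdividing the edge `e0` (with endpoints `a`, `b`): replace it by a new
vertex joined to `a` and to `b`. -/
def subdivide (G : Multigraph) (e0 : G.E) (a b : G.V) (hab : G.ends e0 = s(a, b)) :
    Multigraph where
  V := G.V ⊕ Unit
  E := {e : G.E // e ≠ e0} ⊕ Bool
  ends e := match e with
    | .inl e => (G.ends e.1).map Sum.inl
    | .inr true => s(Sum.inl a, Sum.inr ())
    | .inr false => s(Sum.inl b, Sum.inr ())
  noLoop e := match e with
    | .inl e => fun hd => G.noLoop e.1 ((Sym2.isDiag_map_iff' Sum.inl_injective _).mp hd)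
    | .inr true => by simp [Sym2.mk_isDiag_iff]
    | .inr false => by simp [Sym2.mk_isDiag_iff]

/-- Adding a pendant vertex joined to `u` by `k` parallel edges. -/
def addPendant (G : Multigraph) (u : G.V) (k : ℕ) : Multigraph where
  V := G.V ⊕ Unit
  E := G.E ⊕ Fin k
  ends e := match e with
    | .inl e => (G.ends e).map Sum.inl
    | .inr _ => s(Sum.inl u, Sum.inr ())
  noLoop e := match e with
    | .inl e => fun hd => G.noLoop e ((Sym2.isDiag_map_iff' Sum.inl_injective _).mp hd)
    | .inr _ => by simp [Sym2.mk_isDiag_iff]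

/-- Isomorphism of multigraphs. -/
structure Iso (G1 G2 : Multigraph) where
  vequiv : G1.V ≃ G2.V
  eequiv : G1.E ≃ G2.E
  ends_eq : ∀ e, G2.ends (eequiv e) = (G1.ends e).map vequiv

/-- The graphs obtainable (up to isomorphism) from internally 4-edge-connected
`K_{3,3}`-immersion-free graphs by repeatedly applying: joins on vertices of
degree at most three, disjoint unions, subdividing edges, and adding pendant
vertices joined by single or double edges. -/
inductive Built : Multigraph → Prop
  | base (G : Multigraph) : G.Internally4EC → ¬ Immerses K33 G → Built G
  | join (H1 H2 : Multigraph) (v1 : H1.V) (v2 : H2.V)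
      (π : {e : H1.E // v1 ∈ H1.ends e} ≃ {e : H2.E // v2 ∈ H2.ends e}) :
      3 ≤ Fintype.card H1.V → 3 ≤ Fintype.card H2.V →
      H1.deg v1 ≤ 3 → H2.deg v2 ≤ 3 →
      Built H1 → Built H2 → Built (joinGraph H1 H2 v1 v2 π)
  | union (G1 G2 : Multigraph) : Built G1 → Built G2 → Built (disjUnion G1 G2)
  | subdiv (G : Multigraph) (e0 : G.E) (a b : G.V) (hab : G.ends e0 = s(a, b)) :
      Built G → Built (subdivide G e0 a b hab)
  | pendant (G : Multigraph) (u : G.V) (k : ℕ) : k = 1 ∨ k = 2 →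
      Built G → Built (addPendant G u k)
  | iso (G1 G2 : Multigraph) : Built G1 → Iso G1 G2 → Built G2

end Multigraph

namespace Multigraph

section UnorderedPairs

variable {α β γ : Type*}

lemma isDiag_map_const (s : Sym2 α) (b : β) : (s.map fun _ => b).IsDiag := by
  induction s using Sym2.ind with
  | _ x y => exact Sym2.mk_isDiag_iff.mpr rfl

lemma map_elim_map_inl (f : α → γ) (g : β → γ) (s : Sym2 α) :
    (s.map Sum.inl).map (Sum.elim f g) = s.map f := by
  rw [Sym2.map_map, Sum.elim_comp_inl]

lemma map_elim_map_inr (f : α → γ) (g : β → γ) (s : Sym2 β) :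
    (s.map Sum.inr).map (Sum.elim f g) = s.map g := by
  rw [Sym2.map_map, Sum.elim_comp_inr]

lemma map_attachWith (f : α → β) {s : Sym2 α} {P : α → Prop} (h : ∀ x ∈ s, P x) :
    (s.attachWith h).map (fun x => f x.1) = s.map f := by
  conv_rhs => rw [← Sym2.attachWith_map_subtypeVal h, Sym2.map_map]
  rfl

end UnorderedPairs

section Cuts

variable {G : Multigraph} {A : Finset G.V} {e : G.E} {u v : G.V}

lemma ne_of_ends_eq (h : G.ends e = s(u, v)) : u ≠ v :=
  fun huv => G.noLoop e (h ▸ Sym2.mk_isDiag_iff.mpr huv)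

lemma exists_ends (e : G.E) : ∃ u v, u ≠ v ∧ G.ends e = s(u, v) := by
  induction h : G.ends e using Sym2.ind with
  | _ u v => exact ⟨u, v, ne_of_ends_eq h, rfl⟩

lemma exists_ends_of_mem (h : u ∈ G.ends e) : ∃ v, v ≠ u ∧ G.ends e = s(u, v) := by
  obtain ⟨v, hv⟩ := Sym2.mem_iff_exists.mp h
  exact ⟨v, (ne_of_ends_eq hv).symm, hv⟩

/-- The edges of `G` with both ends in `A`. -/
def inner (G : Multigraph) (A : Finset G.V) : Finset G.E :=
  Finset.univ.filter fun e => ∀ x ∈ G.ends e, x ∈ A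

lemma mem_inner : e ∈ G.inner A ↔ ∀ x ∈ G.ends e, x ∈ A := by simp [inner]

lemma mem_inner_of_ends_eq (h : G.ends e = s(u, v)) : e ∈ G.inner A ↔ u ∈ A ∧ v ∈ A := by
  simp [mem_inner, h]

lemma mem_cut_of_ends_eq (h : G.ends e = s(u, v)) : e ∈ G.cut A ↔ ¬(u ∈ A ↔ v ∈ A) := by
  have hcut : e ∈ G.cut A ↔ ∃ x ∈ A, ∃ y ∉ A, s(u, v) = s(x, y) := by simp [cut, h]
  rw [hcut]
  constructor
  · rintro ⟨x, hx, y, hy, hxy⟩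
    rcases Sym2.eq_iff.mp hxy with ⟨rfl, rfl⟩ | ⟨rfl, rfl⟩ <;> tauto
  · by_cases hu : u ∈ A
    · exact fun hv => ⟨u, hu, v, by tauto, rfl⟩
    · exact fun hv => ⟨v, by tauto, u, hu, Sym2.eq_swap⟩

lemma mem_cut_iff : e ∈ G.cut A ↔ e ∉ G.inner A ∧ e ∉ G.inner Aᶜ := by
  obtain ⟨u, v, -, h⟩ := exists_ends e
  rw [mem_cut_of_ends_eq h, mem_inner_of_ends_eq h, mem_inner_of_ends_eq h, Finset.mem_compl,
    Finset.mem_compl]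
  tauto

lemma cut_compl (A : Finset G.V) : G.cut Aᶜ = G.cut A := by
  ext e
  rw [mem_cut_iff, mem_cut_iff, compl_compl, and_comm]

lemma notMem_inner_compl (h : e ∈ G.inner A) : e ∉ G.inner Aᶜ := by
  obtain ⟨u, v, -, he⟩ := exists_ends e
  rw [mem_inner_of_ends_eq he] at h ⊢
  exact fun hc => Finset.mem_compl.mp hc.1 h.1

lemma mem_cut_singleton : e ∈ G.cut {u} ↔ u ∈ G.ends e := by
  obtain ⟨x, y, hxy, h⟩ := exists_ends e
  rw [mem_cut_of_ends_eq h, h, Sym2.mem_iff, Finset.mem_singleton, Finset.mem_singleton]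
  grind

lemma card_cut_singleton (u : G.V) : (G.cut {u}).card = G.deg u :=
  congrArg Finset.card (by ext e; simp [mem_cut_singleton])

lemma card_cut_le_of_range {ι : Type*} [Fintype ι] (f : ι → G.E)
    (hf : ∀ e ∈ G.cut A, e ∈ Set.range f) : (G.cut A).card ≤ Fintype.card ι :=
  Finset.card_le_card_of_surjOn f (s := Finset.univ) fun e he => by
    simpa using hf e (Finset.mem_coe.mp he)

lemma notMem_cut_of_ends_eq_map {α : Type*} {f : α → G.V} {s : Sym2 α}
    (he : G.ends e = s.map f) (hf : (∀ a, f a ∈ A) ∨ ∀ a, f a ∉ A) : e ∉ G.cut A := by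
  induction s using Sym2.ind with
  | _ a b =>
    rw [mem_cut_of_ends_eq (he.trans (Sym2.map_mk f a b)), not_not]
    exact hf.elim (fun h => iff_of_true (h a) (h b)) fun h => iff_of_false (h a) (h b)

lemma EdgeConnGe.mono {k l : ℕ} (hkl : k ≤ l) (hG : G.EdgeConnGe l) : G.EdgeConnGe k :=
  fun A hne huniv => hkl.trans (hG A hne huniv)

lemma natCard_mem_ends (u : G.V) : Nat.card {e // u ∈ G.ends e} = G.deg u :=
  Nat.card_eq_fintype_card.trans (Fintype.card_subtype _)

lemma card_cut_union {C D : Finset G.V} (hCD : Disjoint C D)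
    (h : ∀ e u v, G.ends e = s(u, v) → u ∈ C → v ∉ D) :
    (G.cut (C ∪ D)).card = (G.cut C).card + (G.cut D).card := by
  have hmem : ∀ e, (e ∈ G.cut (C ∪ D) ↔ e ∈ G.cut C ∨ e ∈ G.cut D) ∧
      ¬(e ∈ G.cut C ∧ e ∈ G.cut D) := fun e => by
    obtain ⟨u, v, -, he⟩ := exists_ends e
    have huv := h e u v he
    have hvu := h e v u (he.trans Sym2.eq_swap)
    have hu : u ∈ C → u ∉ D := fun hu => Finset.disjoint_left.mp hCD hu
    have hv : v ∈ C → v ∉ D := fun hv => Finset.disjoint_left.mp hCD hv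
    simp only [mem_cut_of_ends_eq he, Finset.mem_union]
    tauto
  rw [← Finset.card_union_of_disjoint]
  · congr 1
    ext e
    rw [Finset.mem_union, (hmem e).1]
  · exact Finset.disjoint_left.mpr fun e hC hD => (hmem e).2 ⟨hC, hD⟩

end Cuts

section Reachability

variable {G : Multigraph} {S T : Set G.E} {u v w : G.V} {e : G.E}

/-- `G.ReachIn S u v`: the vertex `v` can be reached from `u` along edges in `S`. -/
def ReachIn (G : Multigraph) (S : Set G.E) : G.V → G.V → Prop :=
  Relation.ReflTransGen fun u v => ∃ e ∈ S, G.ends e = s(u, v)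

namespace ReachIn

lemma refl (u : G.V) : G.ReachIn S u u := Relation.ReflTransGen.refl

lemma trans (h : G.ReachIn S u v) (h' : G.ReachIn S v w) : G.ReachIn S u w :=
  Relation.ReflTransGen.trans h h'

lemma single (he : e ∈ S) (h : G.ends e = s(u, v)) : G.ReachIn S u v :=
  Relation.ReflTransGen.single ⟨e, he, h⟩

lemma symm (h : G.ReachIn S u v) : G.ReachIn S v u := by
  induction h with
  | refl => exact refl _
  | tail _ h ih =>
    obtain ⟨e, he, h⟩ := h
    exact (single he (h.trans Sym2.eq_swap)).trans ih

lemma mono (hST : S ⊆ T) (h : G.ReachIn S u v) : G.ReachIn T u v :=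
  Relation.ReflTransGen.mono (fun _ _ ⟨e, he, h⟩ => ⟨e, hST he, h⟩) u v h

lemma exists_mem_cut {A : Finset G.V} (h : G.ReachIn S u v) (hu : u ∈ A) (hv : v ∉ A) :
    ∃ e ∈ S, e ∈ G.cut A := by
  induction h with
  | refl => exact absurd hu hv
  | @tail b c _ h ih =>
    by_cases hb : b ∈ A
    · obtain ⟨e, he, h⟩ := h
      exact ⟨e, he, (mem_cut_of_ends_eq h).mpr (by tauto)⟩
    · exact ih hb

end ReachIn

namespace Walk

lemma reachIn_edges (p : G.Walk u v) : G.ReachIn {e | e ∈ p.edges} u v := by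
  induction p with
  | nil v => exact .refl v
  | cons e h p ih =>
    exact (ReachIn.single (by simp [edges]) h).trans
      (ih.mono fun f hf => List.mem_cons_of_mem e hf)

lemma start_mem_support (p : G.Walk u v) : u ∈ p.support := by
  cases p <;> simp [support]

lemma mem_support_of_mem_edges (p : G.Walk u v) (he : e ∈ p.edges) (hw : w ∈ G.ends e) :
    w ∈ p.support := by
  induction p with
  | nil v => simp [edges] at he
  | cons f h p ih =>
    rcases List.mem_cons.mp he with rfl | he
    · rcases Sym2.mem_iff.mp (h ▸ hw) with rfl | rfl
      · exact List.mem_cons_self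
      · exact List.mem_cons_of_mem _ p.start_mem_support
    · exact List.mem_cons_of_mem _ (ih he)

lemma IsPath.nodup_edges {p : G.Walk u v} (hp : p.IsPath) : p.edges.Nodup := by
  induction p with
  | nil v => exact List.nodup_nil
  | cons f h p ih =>
    obtain ⟨hu, hp⟩ := List.nodup_cons.mp hp
    exact List.nodup_cons.mpr
      ⟨fun hf => hu (p.mem_support_of_mem_edges hf (by simp [h])), ih hp⟩

lemma exists_append_of_mem_support (p : G.Walk u v) (hw : w ∈ p.support) :
    ∃ (q : G.Walk u w) (r : G.Walk w v),
      p.edges = q.edges ++ r.edges ∧ r.support <:+ p.support := by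
  induction p with
  | nil v =>
    obtain rfl := List.mem_singleton.mp hw
    exact ⟨.nil _, .nil _, rfl, List.suffix_refl _⟩
  | @cons u _ _ f h p ih =>
    by_cases hwu : w = u
    · subst hwu
      exact ⟨.nil _, .cons f h p, rfl, List.suffix_refl _⟩
    · obtain ⟨q, r, hedges, hsupport⟩ := ih ((List.mem_cons.mp hw).resolve_left hwu)
      exact ⟨.cons f h q, r, by simp [edges, hedges], hsupport.trans (List.suffix_cons _ _)⟩

end Walk

lemma ReachIn.exists_isPath (h : G.ReachIn S u v) :
    ∃ p : G.Walk u v, p.IsPath ∧ ∀ e ∈ p.edges, e ∈ S := by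
  induction h using Relation.ReflTransGen.head_induction_on with
  | refl => exact ⟨.nil v, List.nodup_singleton v, fun _ he => absurd he List.not_mem_nil⟩
  | @head a c h _ ih =>
    obtain ⟨e, he, h⟩ := h
    obtain ⟨p, hp, hS⟩ := ih
    by_cases ha : a ∈ p.support
    · obtain ⟨q, r, hedges, hsupport⟩ := p.exists_append_of_mem_support ha
      exact ⟨r, hp.sublist hsupport.sublist, fun f hf => hS f (by simp [hedges, hf])⟩
    · refine ⟨.cons e h p, List.nodup_cons.mpr ⟨ha, hp⟩, fun f hf => ?_⟩
      rcases List.mem_cons.mp hf with rfl | hf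
      · exact he
      · exact hS f hf

lemma ReachIn.exists_mem_reachIn (h : G.ReachIn S u v) {T : Set G.V}
    (hv : v ∈ T) : ∃ w ∈ T, G.ReachIn {e ∈ S | ∃ x ∈ G.ends e, x ∉ T} u w := by
  induction h using Relation.ReflTransGen.head_induction_on with
  | refl => exact ⟨v, hv, .refl v⟩
  | @head a c h _ ih =>
    obtain ⟨e, he, hends⟩ := h
    by_cases ha : a ∈ T
    · exact ⟨a, ha, .refl a⟩
    · obtain ⟨w, hw, hreach⟩ := ih
      exact ⟨w, hw, (ReachIn.single (show e ∈ {e ∈ S | ∃ x ∈ G.ends e, x ∉ T} from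
        ⟨he, a, by simp [hends], ha⟩) hends).trans hreach⟩

-- Take a path from `t 0` to `t 1` and follow a route from `t 2` until it first meets that path.
lemma exists_tripod {t : Fin 3 → G.V} (ht : ∀ i j, G.ReachIn S (t i) (t j)) :
    ∃ (b : G.V) (q : G.E → Fin 3), ∀ i, G.ReachIn {f ∈ S | q f = i} (t i) b := by
  classical
  obtain ⟨p, hp, hpS⟩ := (ht 0 1).exists_isPath
  obtain ⟨b, hb, hreach⟩ :=
    (ht 2 0).exists_mem_reachIn (T := {x | x ∈ p.support}) p.start_mem_support
  obtain ⟨q, r, hedges, -⟩ := p.exists_append_of_mem_support hb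
  have hdisj : q.edges.Disjoint r.edges := List.disjoint_of_nodup_append (hedges ▸ hp.nodup_edges)
  have hq : ∀ f ∈ q.edges, f ∈ p.edges := fun f hf => by simp [hedges, hf]
  have hr : ∀ f ∈ r.edges, f ∈ p.edges := fun f hf => by simp [hedges, hf]
  refine ⟨b, fun f => if f ∈ q.edges then 0 else if f ∈ r.edges then 1 else 2, fun i => ?_⟩
  fin_cases i
  · exact q.reachIn_edges.mono fun f hf => ⟨hpS f (hq f hf), if_pos hf⟩
  · exact r.reachIn_edges.symm.mono fun f hf =>
      ⟨hpS f (hr f hf), (if_neg fun hfq => hdisj hfq hf).trans (if_pos hf)⟩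
  · refine hreach.mono fun f hf => ?_
    obtain ⟨hfS, x, hxf, hx⟩ := hf
    have hfp : f ∉ p.edges := fun hf => hx (p.mem_support_of_mem_edges hf hxf)
    exact ⟨hfS, (if_neg fun hf => hfp (hq f hf)).trans (if_neg fun hf => hfp (hr f hf))⟩

end Reachability

section Routings

variable {H G K : Multigraph} {φ : H.V → G.V} {c : G.E → Option H.E}

/-- A routing of `H` in `G` sends each vertex of `H` to a vertex of `G`, not necessarily
injectively, and colours some edges of `G` by edges of `H` so that the edges of colour `e` connect
the images of the ends of `e`. Encoding the routes by a single colouring makes them edge-disjoint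
by construction. Immersions are the routings that are injective on vertices. -/
def IsRouting (φ : H.V → G.V) (c : G.E → Option H.E) : Prop :=
  ∀ e, ∃ a b, H.ends e = s(a, b) ∧ G.ReachIn {f | c f = some e} (φ a) (φ b)

namespace IsRouting

lemma reachIn (h : IsRouting φ c) {e : H.E} {a b : H.V} (he : H.ends e = s(a, b)) :
    G.ReachIn {f | c f = some e} (φ a) (φ b) := by
  obtain ⟨a', b', he', hreach⟩ := h e
  rcases Sym2.eq_iff.mp (he.symm.trans he') with ⟨rfl, rfl⟩ | ⟨rfl, rfl⟩
  exacts [hreach, hreach.symm]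

lemma comp {ψ : G.V → K.V} {d : K.E → Option G.E} (hψ : IsRouting ψ d) (hφ : IsRouting φ c) :
    IsRouting (ψ ∘ φ) fun f => (d f).bind c := by
  intro e
  obtain ⟨a, b, he, hreach⟩ := hφ e
  refine ⟨a, b, he, Relation.ReflTransGen.lift' ψ (fun u v ⟨g, hg, hends⟩ => ?_) _ _ hreach⟩
  refine (hψ.reachIn hends).mono fun f (hf : d f = some g) => ?_
  change (d f).bind c = some e
  rw [hf]
  exact hg

lemma immerses (h : IsRouting φ c) (hφ : Function.Injective φ) : Immerses H G := by
  choose a b hends hreach using h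
  choose p hpath hcolour using fun e => (hreach e).exists_isPath
  exact ⟨{
    vmap := φ
    inj := hφ
    pstart := fun e => φ (a e)
    pend := fun e => φ (b e)
    walk := p
    ends_eq := fun e => by rw [hends e, Sym2.map_mk]
    isPath := hpath
    edgeDisj := fun e e' hne f hf hf' =>
      hne (Option.some_injective _ ((hcolour e f hf).symm.trans (hcolour e' f hf'))) }⟩

end IsRouting

lemma Immerses.exists_isRouting (h : Immerses H G) :
    ∃ (φ : H.V → G.V) (c : G.E → Option H.E), Function.Injective φ ∧ IsRouting φ c := by
  classical
  obtain ⟨D⟩ := h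
  have huniq : ∀ f e e', f ∈ (D.walk e).edges → f ∈ (D.walk e').edges → e = e' :=
    fun f e e' hf hf' => by_contra fun hne => D.edgeDisj e e' hne hf hf'
  let c : G.E → Option H.E := fun f =>
    if h : ∃ e, f ∈ (D.walk e).edges then some h.choose else none
  have hc : ∀ e, ∀ f ∈ (D.walk e).edges, c f = some e := fun e f hf => by
    have h : ∃ e, f ∈ (D.walk e).edges := ⟨e, hf⟩
    rw [show c f = some h.choose from dif_pos h, huniq f _ _ h.choose_spec hf]
  refine ⟨D.vmap, c, D.inj, fun e => ?_⟩
  have hreach : G.ReachIn {f | c f = some e} (D.pstart e) (D.pend e) :=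
    (D.walk e).reachIn_edges.mono (hc e)
  obtain ⟨a, b, -, he⟩ := exists_ends e
  have hends := D.ends_eq e
  rw [he, Sym2.map_mk] at hends
  rcases Sym2.eq_iff.mp hends with ⟨ha, hb⟩ | ⟨hb, ha⟩
  · exact ⟨a, b, he, ha ▸ hb ▸ hreach⟩
  · exact ⟨a, b, he, ha ▸ hb ▸ hreach.symm⟩

lemma Immerses.trans (h : Immerses H G) (h' : Immerses G K) : Immerses H K := by
  obtain ⟨φ, c, hφ, hc⟩ := h.exists_isRouting
  obtain ⟨ψ, d, hψ, hd⟩ := h'.exists_isRouting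
  exact (hd.comp hc).immerses (hψ.comp hφ)

lemma IsRouting.card_cut_le (h : IsRouting φ c) (A : Finset G.V) :
    (H.cut (Finset.univ.filter (φ · ∈ A))).card ≤ (G.cut A).card := by
  have hcolour : ∀ e ∈ H.cut (Finset.univ.filter (φ · ∈ A)), ∃ f ∈ G.cut A, c f = some e := by
    intro e he
    obtain ⟨a, b, hends, hreach⟩ := h e
    rw [mem_cut_of_ends_eq hends, Finset.mem_filter_univ, Finset.mem_filter_univ] at he
    by_cases ha : φ a ∈ A
    · obtain ⟨f, hf, hfA⟩ := hreach.exists_mem_cut ha (by tauto)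
      exact ⟨f, hfA, hf⟩
    · obtain ⟨f, hf, hfA⟩ := hreach.symm.exists_mem_cut (A := A) (by tauto) ha
      exact ⟨f, hfA, hf⟩
  calc _ = ((H.cut (Finset.univ.filter (φ · ∈ A))).image some).card :=
        (Finset.card_image_of_injective _ (Option.some_injective _)).symm
    _ ≤ ((G.cut A).image c).card := Finset.card_le_card fun x hx => by
        obtain ⟨e, he, rfl⟩ := Finset.mem_image.mp hx
        obtain ⟨f, hf, hfe⟩ := hcolour e he
        exact Finset.mem_image.mpr ⟨f, hf, hfe⟩
    _ ≤ (G.cut A).card := Finset.card_image_le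

namespace IsRouting

lemma forall_mem_or_forall_notMem {k : ℕ} (hH : H.EdgeConnGe k) (h : IsRouting φ c)
    {A : Finset G.V} (hA : (G.cut A).card < k) : (∀ x, φ x ∈ A) ∨ ∀ x, φ x ∉ A := by
  by_contra! ⟨⟨y, hy⟩, x, hx⟩
  have hle := hH (Finset.univ.filter (φ · ∈ A)) ⟨x, by simpa using hx⟩ fun huniv =>
    hy ((Finset.mem_filter_univ y).mp (huniv ▸ Finset.mem_univ y))
  exact absurd (hle.trans (h.card_cut_le A)) hA.not_ge

lemma subsingleton_preimage_or_compl (hH : H.Internally4EC) (h : IsRouting φ c)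
    {A : Finset G.V} (hA : (G.cut A).card ≤ 3) :
    {x | φ x ∈ A}.Subsingleton ∨ {x | φ x ∉ A}.Subsingleton := by
  set B := Finset.univ.filter (φ · ∈ A) with hB
  have hcard : B.card ≤ 1 ∨ Bᶜ.card ≤ 1 := by
    rcases B.eq_empty_or_nonempty with hempty | hne
    · simp [hempty]
    by_cases huniv : B = Finset.univ
    · simp [huniv]
    · have hthree : (H.cut B).card = 3 :=
        le_antisymm ((h.card_cut_le A).trans hA) (hH.1 B hne huniv)
      exact (hH.2 B hne huniv hthree).imp Eq.le Eq.le
  refine hcard.imp (fun hle x hx y hy => ?_) fun hle x hx y hy => ?_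
  · exact Finset.card_le_one.mp hle x (by simpa [hB] using hx) y (by simpa [hB] using hy)
  · exact Finset.card_le_one.mp hle x (by simpa [hB] using hx) y (by simpa [hB] using hy)

lemma of_edge_map (ψ : G.V → K.V) (ι : K.E → G.E)
    (h : ∀ e, ((G.ends e).map ψ).IsDiag ∨ ∃ f, ι f = e ∧ K.ends f = (G.ends e).map ψ) :
    IsRouting ψ (some ∘ ι) := by
  intro e
  obtain ⟨a, b, -, he⟩ := exists_ends e
  refine ⟨a, b, he, ?_⟩
  rcases h e with hdiag | ⟨f, hf, hends⟩
  · rw [he, Sym2.map_mk, Sym2.mk_isDiag_iff] at hdiag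
    exact hdiag ▸ .refl _
  · rw [he, Sym2.map_mk] at hends
    exact .single (congrArg some hf) hends

end IsRouting

lemma immerses_of_isEmpty [IsEmpty H.V] : Immerses H G :=
  IsRouting.immerses (φ := isEmptyElim) (c := fun _ => none)
    (fun e => isEmptyElim (exists_ends e).choose) (Function.injective_of_subsingleton _)

lemma Immerses.of_isRouting_of_injOn {k : ℕ} (hH : H.EdgeConnGe k) (h : Immerses H G)
    {A : Finset G.V} (hA : (G.cut A).card < k) {ψ : G.V → K.V} {d : K.E → Option G.E}
    (hψ : IsRouting ψ d) (hin : Set.InjOn ψ A) (hout : Set.InjOn ψ (A : Set G.V)ᶜ) :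
    Immerses H K := by
  obtain ⟨φ, c, hφ, hc⟩ := h.exists_isRouting
  refine (hψ.comp hc).immerses ?_
  rcases hc.forall_mem_or_forall_notMem hH hA with hmem | hmem
  · exact fun x y hxy => hφ (hin (hmem x) (hmem y) hxy)
  · exact fun x y hxy => hφ (hout (hmem x) (hmem y) hxy)

end Routings

section LeftSummand

variable {α β γ : Type*} [Fintype α]

/-- The left summand of `α ⊕ β`, as a vertex set separating the two parts of each composite graph
`disjUnion`, `subdivide`, `addPendant` and `joinGraph`. -/
abbrev leftSummand (α β : Type*) [Fintype α] : Finset (α ⊕ β) := Finset.univ.disjSum ∅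

lemma inl_mem_leftSummand (a : α) : Sum.inl a ∈ leftSummand α β := by simp

lemma inr_notMem_leftSummand (b : β) : Sum.inr b ∉ leftSummand α β := by simp

lemma injOn_elim_id_leftSummand (g : β → α) : Set.InjOn (Sum.elim id g) (leftSummand α β) := by
  rintro (x | x) hx (y | y) hy hxy <;> simp_all

lemma injOn_elim_id_compl_leftSummand (g : α → β) :
    Set.InjOn (Sum.elim g id) (leftSummand α β : Set (α ⊕ β))ᶜ := by
  rintro (x | x) hx (y | y) hy hxy <;> simp_all

lemma subsingleton_compl_leftSummand [Subsingleton β] :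
    (leftSummand α β : Set (α ⊕ β))ᶜ.Subsingleton := by
  rintro (x | x) hx (y | y) hy
  · exact absurd (inl_mem_leftSummand x) hx
  · exact absurd (inl_mem_leftSummand x) hx
  · exact absurd (inl_mem_leftSummand y) hy
  · exact congrArg Sum.inr (Subsingleton.elim x y)

lemma eq_or_notMem_of_elim_val_const {v : γ} [Fintype {c // c ≠ v}] {x y : {c // c ≠ v} ⊕ β}
    (hxy : Sum.elim (·.1) (fun _ => v) x = Sum.elim (·.1) (fun _ => v) y) :
    x = y ∨ x ∉ leftSummand _ _ ∧ y ∉ leftSummand _ _ := by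
  rcases x with ⟨x, hx⟩ | x <;> rcases y with ⟨y, hy⟩ | y <;> grind [inr_notMem_leftSummand]

lemma eq_or_mem_of_elim_const_val {v : β} {x y : α ⊕ {b // b ≠ v}}
    (hxy : Sum.elim (fun _ => v) (·.1) x = Sum.elim (fun _ => v) (·.1) y) :
    x = y ∨ x ∈ leftSummand _ _ ∧ y ∈ leftSummand _ _ := by
  rcases x with x | ⟨x, hx⟩ <;> rcases y with y | ⟨y, hy⟩ <;> grind [inl_mem_leftSummand]

end LeftSummand

section Operations

variable {H G G₁ G₂ : Multigraph}

lemma Iso.immerses (i : Iso G₁ G₂) : Immerses G₂ G₁ := by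
  refine IsRouting.immerses (IsRouting.of_edge_map i.vequiv.symm i.eequiv fun e => .inr
    ⟨i.eequiv.symm e, i.eequiv.apply_symm_apply e, ?_⟩) i.vequiv.symm.injective
  have hends := i.ends_eq (i.eequiv.symm e)
  rw [i.eequiv.apply_symm_apply] at hends
  rw [hends, Sym2.map_map, i.vequiv.symm_comp_self, Sym2.map_id, id]

lemma card_cut_disjUnion_lt_one : ((disjUnion G₁ G₂).cut (leftSummand G₁.V G₂.V)).card < 1 := by
  refine (card_cut_le_of_range (Empty.elim : Empty → _) fun e he => ?_).trans_lt Nat.zero_lt_one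
  rcases e with e | e
  · exact absurd he (notMem_cut_of_ends_eq_map (s := G₁.ends e) (f := Sum.inl) rfl
      (.inl inl_mem_leftSummand))
  · exact absurd he (notMem_cut_of_ends_eq_map (s := G₂.ends e) (f := Sum.inr) rfl
      (.inr inr_notMem_leftSummand))

lemma isRouting_disjUnion_left (u : G₁.V) : IsRouting (H := disjUnion G₁ G₂) (G := G₁)
    (Sum.elim id fun _ => u) (some ∘ Sum.inl) := by
  refine .of_edge_map _ _ fun e => ?_
  rcases e with e | e
  · exact .inr ⟨e, rfl, by simp [disjUnion, Sym2.map_map]⟩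
  · exact .inl (by simpa [disjUnion, Sym2.map_map] using isDiag_map_const _ u)

lemma isRouting_disjUnion_right (u : G₂.V) : IsRouting (H := disjUnion G₁ G₂) (G := G₂)
    (Sum.elim (fun _ => u) id) (some ∘ Sum.inr) := by
  refine .of_edge_map _ _ fun e => ?_
  rcases e with e | e
  · exact .inl (by simpa [disjUnion, Sym2.map_map] using isDiag_map_const _ u)
  · exact .inr ⟨e, rfl, by simp [disjUnion, Sym2.map_map]⟩

lemma Immerses.of_disjUnion (hH : H.EdgeConnGe 1) (h : Immerses H (disjUnion G₁ G₂)) :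
    Immerses H G₁ ∨ Immerses H G₂ := by
  rcases isEmpty_or_nonempty H.V with _ | ⟨⟨x₀⟩⟩
  · exact .inl immerses_of_isEmpty
  obtain ⟨φ, c, hφ, hc⟩ := h.exists_isRouting
  rcases hc.forall_mem_or_forall_notMem hH card_cut_disjUnion_lt_one with hmem | hmem
  · rcases hx₀ : φ x₀ with u | u
    · exact .inl (((isRouting_disjUnion_left u).comp hc).immerses fun x y hxy =>
        hφ (injOn_elim_id_leftSummand _ (hmem x) (hmem y) hxy))
    · exact absurd (hx₀ ▸ hmem x₀) (inr_notMem_leftSummand u)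
  · rcases hx₀ : φ x₀ with u | u
    · exact absurd (inl_mem_leftSummand u) (hx₀ ▸ hmem x₀)
    · exact .inr (((isRouting_disjUnion_right u).comp hc).immerses fun x y hxy =>
        hφ (injOn_elim_id_compl_leftSummand _ (hmem x) (hmem y) hxy))

lemma card_cut_addPendant_le (u : G.V) (k : ℕ) :
    ((addPendant G u k).cut (leftSummand G.V Unit)).card ≤ k := by
  refine (card_cut_le_of_range (Sum.inr : Fin k → _) fun e he => ?_).trans_eq (Fintype.card_fin k)
  rcases e with e | i
  · exact absurd he (notMem_cut_of_ends_eq_map (s := G.ends e) (f := Sum.inl) rfl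
      (.inl inl_mem_leftSummand))
  · exact ⟨i, rfl⟩

lemma isRouting_addPendant (u : G.V) (k : ℕ) : IsRouting (H := addPendant G u k) (G := G)
    (Sum.elim id fun _ => u) (some ∘ Sum.inl) := by
  refine .of_edge_map _ _ fun e => ?_
  rcases e with e | i
  · exact .inr ⟨e, rfl, by simp [addPendant, Sym2.map_map]⟩
  · exact .inl (by simp [addPendant])

lemma Immerses.of_addPendant {k : ℕ} (hH : H.EdgeConnGe (k + 1)) {u : G.V}
    (h : Immerses H (addPendant G u k)) : Immerses H G :=
  h.of_isRouting_of_injOn hH (Nat.lt_succ_of_le (card_cut_addPendant_le u k))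
    (isRouting_addPendant u k) (injOn_elim_id_leftSummand _)
    (subsingleton_compl_leftSummand.injOn _)

lemma card_cut_subdivide_le {e₀ : G.E} {a b : G.V} (hab : G.ends e₀ = s(a, b)) :
    ((subdivide G e₀ a b hab).cut (leftSummand G.V Unit)).card ≤ 2 := by
  refine (card_cut_le_of_range (Sum.inr : Bool → _) fun e he => ?_).trans_eq Fintype.card_bool
  rcases e with e | i
  · exact absurd he (notMem_cut_of_ends_eq_map (s := G.ends e.1) (f := Sum.inl) rfl
      (.inl inl_mem_leftSummand))
  · exact ⟨i, rfl⟩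

lemma isRouting_subdivide {e₀ : G.E} {a b : G.V} (hab : G.ends e₀ = s(a, b)) :
    IsRouting (H := subdivide G e₀ a b hab) (G := G) (Sum.elim id fun _ => a)
      (some ∘ fun f => if hf : f = e₀ then Sum.inr false else Sum.inl ⟨f, hf⟩) := by
  refine .of_edge_map _ _ fun e => ?_
  rcases e with e | _ | _
  · exact .inr ⟨e.1, dif_neg e.2, by simp [subdivide, Sym2.map_map]⟩
  · exact .inr ⟨e₀, dif_pos rfl, by simp [subdivide, hab, Sym2.eq_swap]⟩
  · exact .inl (by simp [subdivide])

lemma Immerses.of_subdivide (hH : H.EdgeConnGe 3) {e₀ : G.E} {a b : G.V}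
    {hab : G.ends e₀ = s(a, b)} (h : Immerses H (subdivide G e₀ a b hab)) : Immerses H G :=
  h.of_isRouting_of_injOn hH (Nat.lt_succ_of_le (card_cut_subdivide_le hab))
    (isRouting_subdivide hab) (injOn_elim_id_leftSummand _)
    (subsingleton_compl_leftSummand.injOn _)

end Operations

section Joins

variable {H H₁ H₂ : Multigraph} {v₁ : H₁.V} {v₂ : H₂.V}
  {π : {e : H₁.E // v₁ ∈ H₁.ends e} ≃ {e : H₂.E // v₂ ∈ H₂.ends e}}

lemma card_cut_joinGraph_le :
    ((joinGraph H₁ H₂ v₁ v₂ π).cut (leftSummand _ _)).card ≤ H₁.deg v₁ := by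
  refine (card_cut_le_of_range (fun e => Sum.inr (Sum.inr e)) fun e he => ?_).trans_eq
    (Fintype.card_subtype _)
  rcases e with e | e | e
  · exact absurd he (notMem_cut_of_ends_eq_map (f := Sum.inl) rfl (.inl inl_mem_leftSummand))
  · exact absurd he (notMem_cut_of_ends_eq_map (f := Sum.inr) rfl (.inr inr_notMem_leftSummand))
  · exact ⟨e, rfl⟩

lemma isRouting_joinGraph_left : IsRouting (H := joinGraph H₁ H₂ v₁ v₂ π) (G := H₁)
    (Sum.elim (·.1) fun _ => v₁)
    (some ∘ fun f =>
      if hf : v₁ ∈ H₁.ends f then Sum.inr (Sum.inr ⟨f, hf⟩) else Sum.inl ⟨f, hf⟩) := by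
  refine .of_edge_map _ _ fun e => ?_
  rcases e with e | e | e
  · refine .inr ⟨e.1, dif_neg e.2, ?_⟩
    simp only [joinGraph, Sym2.map_map, Sum.elim_comp_inl]
    exact (Sym2.attachWith_map_subtypeVal _).symm
  · exact .inl (by simpa [joinGraph, Sym2.map_map] using isDiag_map_const _ v₁)
  · exact .inr ⟨e.1, dif_pos e.2, by simp [joinGraph, Sym2.eq_swap, Sym2.other_spec']⟩

lemma isRouting_joinGraph_right : IsRouting (H := joinGraph H₁ H₂ v₁ v₂ π) (G := H₂)
    (Sum.elim (fun _ => v₂) (·.1))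
    (some ∘ fun f => if hf : v₂ ∈ H₂.ends f then Sum.inr (Sum.inr (π.symm ⟨f, hf⟩))
      else Sum.inr (Sum.inl ⟨f, hf⟩)) := by
  refine .of_edge_map _ _ fun e => ?_
  rcases e with e | e | e
  · exact .inl (by simpa [joinGraph, Sym2.map_map] using isDiag_map_const _ v₂)
  · refine .inr ⟨e.1, dif_neg e.2, ?_⟩
    simp only [joinGraph, Sym2.map_map, Sum.elim_comp_inr]
    exact (Sym2.attachWith_map_subtypeVal _).symm
  · exact .inr ⟨(π e).1,
      (dif_pos (π e).2).trans (congrArg (Sum.inr ∘ Sum.inr) (π.symm_apply_apply e)),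
      by simp [joinGraph, Sym2.other_spec']⟩

lemma Immerses.of_joinGraph (hH : H.Internally4EC) (hv₁ : H₁.deg v₁ ≤ 3)
    (h : Immerses H (joinGraph H₁ H₂ v₁ v₂ π)) : Immerses H H₁ ∨ Immerses H H₂ := by
  obtain ⟨φ, c, hφ, hc⟩ := h.exists_isRouting
  rcases hc.subsingleton_preimage_or_compl hH (card_cut_joinGraph_le.trans hv₁) with hsub | hsub
  · refine .inr ((isRouting_joinGraph_right.comp hc).immerses fun x y hxy => ?_)
    rcases eq_or_mem_of_elim_const_val hxy with hφxy | ⟨hx, hy⟩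
    exacts [hφ hφxy, hsub hx hy]
  · refine .inl ((isRouting_joinGraph_left.comp hc).immerses fun x y hxy => ?_)
    rcases eq_or_notMem_of_elim_val_const hxy with hφxy | ⟨hx, hy⟩
    exacts [hφ hφxy, hsub hx hy]

end Joins

section Construction

variable {𝓑 : Multigraph → Prop} {H G : Multigraph}

/-- The graphs obtainable (up to isomorphism) from graphs in `𝓑` by the operations of `Built`. -/
inductive BuiltFrom (𝓑 : Multigraph → Prop) : Multigraph → Prop
  | base (G : Multigraph) : 𝓑 G → BuiltFrom 𝓑 G
  | join (H₁ H₂ : Multigraph) (v₁ : H₁.V) (v₂ : H₂.V)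
      (π : {e : H₁.E // v₁ ∈ H₁.ends e} ≃ {e : H₂.E // v₂ ∈ H₂.ends e}) :
      3 ≤ Fintype.card H₁.V → 3 ≤ Fintype.card H₂.V → H₁.deg v₁ ≤ 3 → H₂.deg v₂ ≤ 3 →
      BuiltFrom 𝓑 H₁ → BuiltFrom 𝓑 H₂ → BuiltFrom 𝓑 (joinGraph H₁ H₂ v₁ v₂ π)
  | union (G₁ G₂ : Multigraph) : BuiltFrom 𝓑 G₁ → BuiltFrom 𝓑 G₂ → BuiltFrom 𝓑 (disjUnion G₁ G₂)
  | subdiv (G : Multigraph) (e₀ : G.E) (a b : G.V) (hab : G.ends e₀ = s(a, b)) :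
      BuiltFrom 𝓑 G → BuiltFrom 𝓑 (subdivide G e₀ a b hab)
  | pendant (G : Multigraph) (u : G.V) (k : ℕ) : k = 1 ∨ k = 2 →
      BuiltFrom 𝓑 G → BuiltFrom 𝓑 (addPendant G u k)
  | iso (G₁ G₂ : Multigraph) : BuiltFrom 𝓑 G₁ → Iso G₁ G₂ → BuiltFrom 𝓑 G₂

lemma built_iff_builtFrom :
    Built G ↔ BuiltFrom (fun B => B.Internally4EC ∧ ¬ Immerses K33 B) G := by
  constructor <;> intro h
  · induction h with
    | base G hG hfree => exact .base G ⟨hG, hfree⟩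
    | join H₁ H₂ v₁ v₂ π hc₁ hc₂ hd₁ hd₂ _ _ ih₁ ih₂ =>
      exact .join H₁ H₂ v₁ v₂ π hc₁ hc₂ hd₁ hd₂ ih₁ ih₂
    | union G₁ G₂ _ _ ih₁ ih₂ => exact .union G₁ G₂ ih₁ ih₂
    | subdiv G e₀ a b hab _ ih => exact .subdiv G e₀ a b hab ih
    | pendant G u k hk _ ih => exact .pendant G u k hk ih
    | iso G₁ G₂ _ i ih => exact .iso G₁ G₂ ih i
  · induction h with
    | base G hG => exact .base G hG.1 hG.2
    | join H₁ H₂ v₁ v₂ π hc₁ hc₂ hd₁ hd₂ _ _ ih₁ ih₂ =>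
      exact .join H₁ H₂ v₁ v₂ π hc₁ hc₂ hd₁ hd₂ ih₁ ih₂
    | union G₁ G₂ _ _ ih₁ ih₂ => exact .union G₁ G₂ ih₁ ih₂
    | subdiv G e₀ a b hab _ ih => exact .subdiv G e₀ a b hab ih
    | pendant G u k hk _ ih => exact .pendant G u k hk ih
    | iso G₁ G₂ _ i ih => exact .iso G₁ G₂ ih i

theorem BuiltFrom.not_immerses (hH : H.Internally4EC) (h𝓑 : ∀ B, 𝓑 B → ¬ Immerses H B)
    (h : BuiltFrom 𝓑 G) : ¬ Immerses H G := by
  induction h with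
  | base G hG => exact h𝓑 G hG
  | join H₁ H₂ v₁ v₂ π _ _ hd₁ _ _ _ ih₁ ih₂ =>
    exact fun h => (h.of_joinGraph hH hd₁).elim ih₁ ih₂
  | union G₁ G₂ _ _ ih₁ ih₂ =>
    exact fun h => (h.of_disjUnion (hH.1.mono (by decide))).elim ih₁ ih₂
  | subdiv G e₀ a b hab _ ih => exact fun h => ih (h.of_subdivide hH.1)
  | pendant G u k hk _ ih => exact fun h => ih (h.of_addPendant (hH.1.mono (by lia)))
  | iso G₁ G₂ _ i ih => exact fun h => ih (h.trans i.immerses)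

end Construction

section Collapse

variable {α : Type*} {A : Finset α} {b x y : α}

/-- Collapses the complement of `A` to the point `none`. -/
def collapse [DecidableEq α] (A : Finset α) (x : α) : Option {x // x ∈ A} :=
  if h : x ∈ A then some ⟨x, h⟩ else none

/-- The section of `collapse A` that sends the collapsed point to `b`. -/
def expand (A : Finset α) (b : α) (o : Option {x // x ∈ A}) : α :=
  o.elim b Subtype.val

lemma collapse_of_mem [DecidableEq α] (h : x ∈ A) :
    collapse A x = some ⟨x, h⟩ := dif_pos h

lemma collapse_of_notMem [DecidableEq α] (h : x ∉ A) :
    collapse A x = none := dif_neg h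

lemma expand_injective (hb : b ∉ A) :
    Function.Injective (expand A b) := by
  rintro (_ | x) (_ | y) hxy
  · rfl
  · exact absurd y.2 fun hy => hb ((show b = y.1 from hxy) ▸ hy)
  · exact absurd x.2 fun hx => hb ((show x.1 = b from hxy) ▸ hx)
  · exact congrArg some (Subtype.ext hxy)

lemma expand_mem {o : Option {x // x ∈ A}} (ho : o ≠ none) : expand A b o ∈ A := by
  obtain ⟨x, rfl⟩ := Option.ne_none_iff_exists'.mp ho
  exact x.2

lemma mem_range_expand :
    y ∈ Set.range (expand A b) ↔ y ∈ A ∨ y = b := by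
  constructor
  · rintro ⟨_ | x, rfl⟩
    exacts [.inr rfl, .inl x.2]
  · rintro (hy | rfl)
    exacts [⟨some ⟨y, hy⟩, rfl⟩, ⟨none, rfl⟩]

lemma map_expand_map_collapse [DecidableEq α] {s : Sym2 α}
    (hs : ∀ x ∈ s, x ∈ A ∨ x = b) : (s.map (collapse A)).map (expand A b) = s := by
  rw [Sym2.map_map]
  refine (Sym2.map_congr fun x hx => ?_).trans (congrFun Sym2.map_id s)
  rcases hs x hx with h | rfl <;> grind [collapse, expand]

end Collapse

section Contraction

variable {G : Multigraph} {A : Finset G.V} {b : G.V}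

/-- The subgraph of `G` induced on `A`. -/
def induce (G : Multigraph) (A : Finset G.V) : Multigraph where
  V := {x // x ∈ A}
  E := {e // e ∈ G.inner A}
  ends e := (G.ends e.1).attachWith (mem_inner.mp e.2)
  noLoop e hdiag := G.noLoop e.1 <| by
    rw [← Sym2.attachWith_map_subtypeVal (mem_inner.mp e.2)]
    exact (Sym2.isDiag_map_iff' Subtype.val_injective _).mpr hdiag

lemma map_val_ends_induce (e : (G.induce A).E) :
    ((G.induce A).ends e).map Subtype.val = G.ends e.1 :=
  Sym2.attachWith_map_subtypeVal _

lemma immerses_induce (G : Multigraph) (A : Finset G.V) : Immerses (G.induce A) G := by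
  refine IsRouting.immerses (φ := Subtype.val)
    (c := fun f => if hf : f ∈ G.inner A then some ⟨f, hf⟩ else none)
    (fun e => ?_) Subtype.val_injective
  obtain ⟨a, b, -, he⟩ := exists_ends e
  exact ⟨a, b, he, .single (dif_pos e.2)
    ((map_val_ends_induce e).symm.trans (congrArg (Sym2.map Subtype.val) he))⟩

lemma card_induce (G : Multigraph) (A : Finset G.V) : Fintype.card (G.induce A).V = A.card :=
  Fintype.card_coe A

/-- The graph obtained from `G` by contracting the complement of `A` to a single vertex `none`
and deleting the resulting loops. -/
def contract (G : Multigraph) (A : Finset G.V) : Multigraph where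
  V := Option {x // x ∈ A}
  E := {e // e ∉ G.inner Aᶜ}
  ends e := (G.ends e.1).map (collapse A)
  noLoop := by
    rintro ⟨e, he⟩
    obtain ⟨u, v, huv, hends⟩ := exists_ends e
    rw [mem_inner_of_ends_eq hends, Finset.mem_compl, Finset.mem_compl] at he
    rw [hends, Sym2.map_mk, Sym2.mk_isDiag_iff]
    grind [collapse]

lemma card_contract (G : Multigraph) (A : Finset G.V) :
    Fintype.card (G.contract A).V = A.card + 1 := by
  change Fintype.card (Option {x // x ∈ A}) = _
  rw [Fintype.card_option, Fintype.card_coe]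

lemma none_mem_ends_contract {e : {e // e ∉ G.inner Aᶜ}} :
    none ∈ (G.contract A).ends e ↔ e.1 ∈ G.cut A := by
  rw [mem_cut_iff, mem_inner]
  have hnone : ∀ x, collapse A x = none ↔ x ∉ A := fun x => by grind [collapse]
  change none ∈ (G.ends e.1).map (collapse A) ↔ _
  simp [Sym2.mem_map, hnone, e.2]

lemma immerses_contract (hb : b ∉ A) (q : G.E → {e // e ∈ G.cut A})
    (hq : ∀ e, ∃ v ∈ G.ends e.1, v ∉ A ∧ G.ReachIn {f | f ∈ G.inner Aᶜ ∧ q f = e} v b) :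
    Immerses (G.contract A) G := by
  let c : G.E → Option (G.contract A).E := fun f =>
    if hf : f ∈ G.inner Aᶜ then some ⟨q f, (mem_cut_iff.mp (q f).2).2⟩ else some ⟨f, hf⟩
  refine IsRouting.immerses (φ := expand A b) (c := c) ?_ (expand_injective hb)
  rintro ⟨e, he⟩
  have hce : c e = some ⟨e, he⟩ := dif_neg he
  by_cases hcut : e ∈ G.cut A
  · obtain ⟨v, hve, hvA, hreach⟩ := hq ⟨e, hcut⟩
    obtain ⟨u, -, hends⟩ := exists_ends_of_mem hve
    have huA : u ∈ A := by rw [mem_cut_of_ends_eq hends] at hcut; tauto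
    refine ⟨some ⟨u, huA⟩, none, ?_, ?_⟩
    · simp [contract, hends, collapse_of_mem huA, collapse_of_notMem hvA, Sym2.eq_swap]
    · exact (ReachIn.single hce (hends.trans Sym2.eq_swap)).trans
        (hreach.mono fun f hf => (dif_pos hf.1).trans (by simp [hf.2]))
  · have hin : e ∈ G.inner A := by rw [mem_cut_iff] at hcut; tauto
    obtain ⟨u, v, -, hends⟩ := exists_ends e
    obtain ⟨hu, hv⟩ := (mem_inner_of_ends_eq hends).mp hin
    refine ⟨some ⟨u, hu⟩, some ⟨v, hv⟩, ?_, .single hce hends⟩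
    simp [contract, hends, collapse_of_mem hu, collapse_of_mem hv]

lemma immerses_contract_of_card_cut_le_three (hne : (G.cut A).Nonempty)
    (hcard : (G.cut A).card ≤ 3)
    (hconn : ∀ u v, u ∉ A → v ∉ A → G.ReachIn (G.inner Aᶜ) u v) :
    Immerses (G.contract A) G := by
  have : Nonempty {e // e ∈ G.cut A} := hne.to_subtype
  obtain ⟨ι⟩ := Function.Embedding.nonempty_of_card_le (α := {e // e ∈ G.cut A}) (β := Fin 3)
    (by simpa using hcard)
  let σ := Function.invFun ι
  have hσsurj : Function.Surjective σ := Function.invFun_surjective ι.injective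
  have hout : ∀ e : {e // e ∈ G.cut A}, ∃ v ∈ G.ends e.1, v ∉ A := fun e => by
    have h := (mem_cut_iff.mp e.2).1
    rw [mem_inner] at h
    push Not at h
    exact h
  choose t hte htA using hout
  obtain ⟨b, q, hq⟩ := exists_tripod (t := t ∘ σ) fun i j => hconn _ _ (htA _) (htA _)
  have hb : b ∉ A := fun hbA => by
    obtain ⟨f, hf, hcut⟩ := (hq 0).symm.exists_mem_cut hbA (htA _)
    exact (mem_cut_iff.mp hcut).2 hf.1
  refine immerses_contract hb (σ ∘ q) fun e => ⟨t e, hte e, htA e, ?_⟩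
  obtain ⟨i, rfl⟩ := hσsurj e
  exact (hq i).mono fun f hf => ⟨hf.1, congrArg σ hf.2⟩

end Contraction

section Decomposition

variable {𝓑 : Multigraph → Prop} {G G₁ G₂ : Multigraph} {A : Finset G.V}

lemma BuiltFrom.of_bijective (h : BuiltFrom 𝓑 G₁) {φ : G₁.V → G₂.V} {ψ : G₁.E → G₂.E}
    (hφ : Function.Bijective φ) (hψ : Function.Bijective ψ)
    (hends : ∀ e, G₂.ends (ψ e) = (G₁.ends e).map φ) : BuiltFrom 𝓑 G₂ :=
  .iso G₁ G₂ h ⟨.ofBijective φ hφ, .ofBijective ψ hψ, hends⟩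

lemma BuiltFrom.of_cut_eq_empty (hA : G.cut A = ∅) (h₁ : BuiltFrom 𝓑 (G.induce A))
    (h₂ : BuiltFrom 𝓑 (G.induce Aᶜ)) : BuiltFrom 𝓑 G := by
  refine (BuiltFrom.union _ _ h₁ h₂).of_bijective (φ := Sum.elim Subtype.val Subtype.val)
    (ψ := Sum.elim Subtype.val Subtype.val) ⟨?_, fun x => ?_⟩ ⟨?_, fun e => ?_⟩ ?_
  · exact Subtype.val_injective.sumElim Subtype.val_injective fun x y hxy =>
      Finset.mem_compl.mp y.2 (hxy ▸ x.2)
  · by_cases hx : x ∈ A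
    exacts [⟨.inl ⟨x, hx⟩, rfl⟩, ⟨.inr ⟨x, Finset.mem_compl.mpr hx⟩, rfl⟩]
  · exact Subtype.val_injective.sumElim Subtype.val_injective fun e f hef =>
      notMem_inner_compl e.2 (hef ▸ f.2)
  · by_cases he : e ∈ G.inner A
    · exact ⟨.inl ⟨e, he⟩, rfl⟩
    · have hcut : e ∉ G.cut A := hA ▸ Finset.notMem_empty e
      rw [mem_cut_iff] at hcut
      exact ⟨.inr ⟨e, by tauto⟩, rfl⟩
  · rintro (e | e)
    · exact (map_val_ends_induce e).symm.trans (map_elim_map_inl _ _ _).symm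
    · exact (map_val_ends_induce e).symm.trans (map_elim_map_inr _ _ _).symm

lemma BuiltFrom.of_forall_ends_eq {u x : G.V} (hux : u ≠ x)
    (hends : ∀ e, x ∈ G.ends e → G.ends e = s(u, x)) (hdeg : G.deg x = 1 ∨ G.deg x = 2)
    (h : BuiltFrom 𝓑 (G.induce {x}ᶜ)) : BuiltFrom 𝓑 G := by
  have ε : Fin (G.deg x) ≃ {e // x ∈ G.ends e} :=
    (Finite.equivFinOfCardEq (natCard_mem_ends x)).symm
  have hinner : ∀ e, e ∈ G.inner {x}ᶜ ↔ x ∉ G.ends e := fun e => by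
    rw [mem_inner]
    simp only [Finset.mem_compl, Finset.mem_singleton]
    grind
  have hmem : ∀ y, y ∈ ({x} : Finset G.V)ᶜ ↔ y ≠ x := by simp
  refine (BuiltFrom.pendant (G.induce {x}ᶜ) ⟨u, (hmem u).mpr hux⟩ _ hdeg h).of_bijective
    (φ := Sum.elim Subtype.val fun _ => x)
    (ψ := Sum.elim Subtype.val (Subtype.val ∘ ε)) ⟨?_, fun y => ?_⟩ ⟨?_, fun e => ?_⟩ ?_
  · exact Subtype.val_injective.sumElim (Function.injective_of_subsingleton _) fun y _ =>
      (hmem y.1).mp y.2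
  · by_cases hy : y = x
    exacts [⟨.inr (), hy.symm⟩, ⟨.inl ⟨y, (hmem y).mpr hy⟩, rfl⟩]
  · exact Subtype.val_injective.sumElim (Subtype.val_injective.comp ε.injective) fun e i hei =>
      (hinner e.1).mp e.2 (by rw [hei]; exact (ε i).2)
  · by_cases he : x ∈ G.ends e
    · exact ⟨.inr (ε.symm ⟨e, he⟩), congrArg Subtype.val (ε.apply_symm_apply ⟨e, he⟩)⟩
    · exact ⟨.inl ⟨e, (hinner e).mpr he⟩, rfl⟩
  · rintro (e | i)
    · exact (map_val_ends_induce e).symm.trans (map_elim_map_inl _ _ _).symm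
    · exact hends _ (ε i).2

section Suppress

variable {x a b : G.V} {e₁ e₂ : G.E}

lemma mem_range_expand_compl_pair (hbx : b ≠ x) {y : G.V} :
    y ∈ Set.range (expand {x, b}ᶜ b) ↔ y ≠ x := by
  rw [mem_range_expand, Finset.mem_compl, Finset.mem_insert, Finset.mem_singleton]
  grind

lemma mem_inner_compl_compl_pair (hab : a ≠ b) (h₁ : G.ends e₁ = s(a, x))
    (h₂ : G.ends e₂ = s(b, x)) (hx : ∀ e, x ∈ G.ends e → e = e₁ ∨ e = e₂) {e : G.E} :
    e ∈ G.inner {x, b}ᶜᶜ ↔ e = e₂ := by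
  obtain ⟨u, v, huv, he⟩ := exists_ends e
  have hxe := hx e
  rw [compl_compl, mem_inner_of_ends_eq he]
  simp only [Finset.mem_insert, Finset.mem_singleton]
  grind

-- Contracting `{x, b}` amounts to contracting the edge `e₂`, so `G` arises by subdividing `e₁`.
lemma immerses_contract_compl_pair (hab : a ≠ b) (h₁ : G.ends e₁ = s(a, x))
    (h₂ : G.ends e₂ = s(b, x)) (hx : ∀ e, x ∈ G.ends e → e = e₁ ∨ e = e₂) :
    Immerses (G.contract {x, b}ᶜ) G := by
  have hinner : ∀ {e}, e ∈ G.inner {x, b}ᶜᶜ ↔ e = e₂ := mem_inner_compl_compl_pair hab h₁ h₂ hx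
  have hcut : e₁ ∈ G.cut {x, b}ᶜ := by
    rw [mem_cut_of_ends_eq h₁]
    simp [hab, ne_of_ends_eq h₁]
  refine immerses_contract (b := b) (by simp) (fun _ => ⟨e₁, hcut⟩) fun ⟨e, he⟩ => ?_
  by_cases hbe : b ∈ G.ends e
  · exact ⟨b, hbe, by simp, .refl b⟩
  · have hxe : x ∈ G.ends e := by
      have := (mem_cut_iff.mp he).1
      rw [mem_inner] at this
      simp only [Finset.mem_compl, Finset.mem_insert, Finset.mem_singleton] at this
      grind
    have hee₁ : e = e₁ := (hx e hxe).resolve_right fun h => hbe (by simp [h, h₂])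
    exact ⟨x, hxe, by simp, .single (show e₂ ∈ {f | _} from
      ⟨hinner.mpr rfl, Subtype.ext hee₁.symm⟩) (h₂.trans Sym2.eq_swap)⟩

lemma bijective_expand_subdivide (hbx : b ≠ x) :
    Function.Bijective (Sum.elim (expand {x, b}ᶜ b) fun _ : Unit => x) := by
  have hrange : ∀ {y}, y ∈ Set.range (expand {x, b}ᶜ b) ↔ y ≠ x := mem_range_expand_compl_pair hbx
  refine ⟨(expand_injective (by simp)).sumElim (Function.injective_of_subsingleton _)
    fun o _ => hrange.mp ⟨o, rfl⟩, fun y => ?_⟩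
  by_cases hy : y = x
  · exact ⟨.inr (), hy.symm⟩
  · obtain ⟨o, ho⟩ := hrange.mpr hy
    exact ⟨.inl o, ho⟩

lemma bijective_val_subdivide {S : Finset G.E} (hS : ∀ {e}, e ∈ S ↔ e = e₂) (he₁ : e₁ ∉ S) :
    Function.Bijective (Sum.elim (·.1.1) fun i => bif i then e₁ else e₂ :
      {e : {e // e ∉ S} // e ≠ ⟨e₁, he₁⟩} ⊕ Bool → G.E) := by
  have hne : e₁ ≠ e₂ := hS.not.mp he₁
  refine ⟨(Subtype.val_injective.comp Subtype.val_injective).sumElim ?_ ?_, fun f => ?_⟩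
  · rintro (_ | _) (_ | _) h <;> grind
  · rintro ⟨⟨f, hf⟩, hf₁⟩ (_ | _)
    exacts [fun h => hf (hS.mpr h), fun h => hf₁ (Subtype.ext h)]
  · by_cases hf₁ : f = e₁
    · exact ⟨.inr true, hf₁.symm⟩
    by_cases hf₂ : f = e₂
    · exact ⟨.inr false, hf₂.symm⟩
    · exact ⟨.inl ⟨⟨f, hS.not.mpr hf₂⟩, fun h => hf₁ (congrArg Subtype.val h)⟩, rfl⟩

lemma BuiltFrom.of_contract_compl_pair (hab : a ≠ b) (h₁ : G.ends e₁ = s(a, x))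
    (h₂ : G.ends e₂ = s(b, x)) (hx : ∀ e, x ∈ G.ends e → e = e₁ ∨ e = e₂)
    (h : BuiltFrom 𝓑 (G.contract {x, b}ᶜ)) : BuiltFrom 𝓑 G := by
  have hax := ne_of_ends_eq h₁
  have hbx := ne_of_ends_eq h₂
  have hinner : ∀ {e}, e ∈ G.inner {x, b}ᶜᶜ ↔ e = e₂ := mem_inner_compl_compl_pair hab h₁ h₂ hx
  have he₁ : e₁ ∉ G.inner {x, b}ᶜᶜ := fun h => hab (by
    rw [hinner.mp h, h₂] at h₁
    exact (Sym2.congr_left.mp h₁).symm)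
  have hends : (G.contract {x, b}ᶜ).ends ⟨e₁, he₁⟩ =
      s(some ⟨a, by simp [hax, hab]⟩, none) := by
    simp [contract, h₁, collapse, hax, hab]
  refine (BuiltFrom.subdiv (G.contract {x, b}ᶜ) _ _ _ hends h).of_bijective
    (bijective_expand_subdivide hbx) (bijective_val_subdivide hinner he₁) ?_
  rintro (⟨⟨f, hf⟩, hf₁⟩ | _ | _)
  · refine (map_expand_map_collapse fun y hy => ?_).symm.trans (map_elim_map_inl _ _ _).symm
    refine mem_range_expand.mp ((mem_range_expand_compl_pair hbx).mpr ?_)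
    rintro rfl
    rcases hx f hy with rfl | rfl
    exacts [hf₁ rfl, hf (hinner.mpr rfl)]
  · exact h₂
  · exact h₁

end Suppress

/-- The edges at the contracted vertex are the edges of the cut. -/
def contractEdgesAtNone (G : Multigraph) (A : Finset G.V) :
    {e // none ∈ (G.contract A).ends e} ≃ {e // e ∈ G.cut A} where
  toFun e := ⟨e.1.1, none_mem_ends_contract.mp e.2⟩
  invFun e := ⟨⟨e.1, (mem_cut_iff.mp e.2).2⟩, none_mem_ends_contract.mpr e.2⟩

lemma deg_none_contract (G : Multigraph) (A : Finset G.V) :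
    (G.contract A).deg none = (G.cut A).card :=
  (natCard_mem_ends (G := G.contract A) none).symm.trans <|
    (Nat.card_congr (G.contractEdgesAtNone A)).trans (Nat.card_eq_finsetCard _)

lemma mem_inner_of_none_notMem {e : {e // e ∉ G.inner Aᶜ}} (h : none ∉ (G.contract A).ends e) :
    e.1 ∈ G.inner A := by
  rw [none_mem_ends_contract, mem_cut_iff] at h
  exact by_contra fun he => h ⟨he, e.2⟩

lemma map_expand_ends_contract {e : {e // e ∉ G.inner Aᶜ}} {b : G.V}
    (h : none ∉ (G.contract A).ends e) : ((G.contract A).ends e).map (expand A b) = G.ends e.1 := by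
  refine map_expand_map_collapse fun x hx => .inl ?_
  by_contra hxA
  exact h (Sym2.mem_map.mpr ⟨x, hx, collapse_of_notMem hxA⟩)

lemma expand_other' {e : {e // e ∉ G.inner Aᶜ}} {b u v : G.V} (he : G.ends e.1 = s(u, v))
    (hu : u ∈ A) (hv : v ∉ A) (h : none ∈ (G.contract A).ends e) :
    expand A b (Sym2.Mem.other' h) = u := by
  have hends : (G.contract A).ends e = s(none, some ⟨u, hu⟩) := by
    simp [contract, he, collapse_of_mem hu, collapse_of_notMem hv, Sym2.eq_swap]
  rw [Sym2.congr_right.mp ((Sym2.other_spec' h).trans hends)]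
  rfl

lemma bijective_expand_join {b c : G.V} (hb : b ∉ A) (hc : c ∈ A) : Function.Bijective
    (Sum.elim (fun o => expand A b o.1) (fun o => expand Aᶜ c o.1) :
      {o : Option {x // x ∈ A} // o ≠ none} ⊕ {o : Option {x // x ∈ Aᶜ} // o ≠ none} → G.V) := by
  refine ⟨((expand_injective hb).comp Subtype.val_injective).sumElim
    ((expand_injective (by simpa)).comp Subtype.val_injective) fun x y hxy => ?_, fun y => ?_⟩
  · have hy : expand Aᶜ c y.1 ∈ Aᶜ := expand_mem y.2
    exact Finset.mem_compl.mp hy (hxy ▸ expand_mem (b := b) x.2)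
  · by_cases hy : y ∈ A
    · exact ⟨.inl ⟨some ⟨y, hy⟩, Option.some_ne_none _⟩, rfl⟩
    · exact ⟨.inr ⟨some ⟨y, Finset.mem_compl.mpr hy⟩, Option.some_ne_none _⟩, rfl⟩

lemma bijective_val_join : Function.Bijective
    (Sum.elim (·.1.1) (Sum.elim (·.1.1) (·.1.1)) :
      {e // none ∉ (G.contract A).ends e} ⊕ {e // none ∉ (G.contract Aᶜ).ends e} ⊕
        {e // none ∈ (G.contract A).ends e} → G.E) := by
  have hinj : ∀ (p : G.E → Prop) (q : Subtype p → Prop),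
      Function.Injective fun e : Subtype q => e.1.1 :=
    fun _ _ => Subtype.val_injective.comp Subtype.val_injective
  refine ⟨(hinj _ _).sumElim ((hinj _ _).sumElim (hinj _ _) fun f e hfe => ?_) ?_, fun f => ?_⟩
  · exact e.1.2 (hfe ▸ mem_inner_of_none_notMem f.2)
  · rintro e (f | f) (hef : e.1.1 = f.1.1)
    · exact notMem_inner_compl (mem_inner_of_none_notMem e.2) (hef ▸ mem_inner_of_none_notMem f.2)
    · exact (mem_cut_iff.mp (none_mem_ends_contract.mp f.2)).1 (hef ▸ mem_inner_of_none_notMem e.2)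
  · by_cases hf : f ∈ G.cut A
    · exact ⟨.inr (.inr ((G.contractEdgesAtNone A).symm ⟨f, hf⟩)), rfl⟩
    by_cases hfA : f ∈ G.inner A
    · exact ⟨.inl ⟨⟨f, notMem_inner_compl hfA⟩, fun h => hf (none_mem_ends_contract.mp h)⟩, rfl⟩
    · refine ⟨.inr (.inl ⟨⟨f, by rwa [compl_compl]⟩, fun h => ?_⟩), rfl⟩
      exact hf (G.cut_compl A ▸ none_mem_ends_contract.mp h)

lemma BuiltFrom.of_contract (hA : 2 ≤ A.card) (hA' : 2 ≤ Aᶜ.card)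
    (hcut : (G.cut A).card ≤ 3) (h₁ : BuiltFrom 𝓑 (G.contract A))
    (h₂ : BuiltFrom 𝓑 (G.contract Aᶜ)) : BuiltFrom 𝓑 G := by
  obtain ⟨c, hc⟩ : A.Nonempty := Finset.card_pos.mp (by lia)
  obtain ⟨b, hb⟩ : Aᶜ.Nonempty := Finset.card_pos.mp (by lia)
  let π := (G.contractEdgesAtNone A).trans <|
    (Equiv.subtypeEquivRight fun e => by rw [G.cut_compl]).trans (G.contractEdgesAtNone Aᶜ).symm
  have hjoin := BuiltFrom.join (G.contract A) (G.contract Aᶜ) none none π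
    (by rw [card_contract]; lia) (by rw [card_contract]; lia) (by rwa [deg_none_contract])
    (by rwa [deg_none_contract, cut_compl]) h₁ h₂
  refine hjoin.of_bijective (bijective_expand_join (Finset.mem_compl.mp hb) hc)
    bijective_val_join ?_
  rintro (e | e | e)
  · exact (map_expand_ends_contract (b := b) e.2).symm.trans
      ((map_elim_map_inl _ _ _).trans (map_attachWith _ _)).symm
  · exact (map_expand_ends_contract (b := c) e.2).symm.trans
      ((map_elim_map_inr _ _ _).trans (map_attachWith _ _)).symm
  · obtain ⟨u, hu, v, hv, he⟩ := (Finset.mem_filter.mp (none_mem_ends_contract.mp e.2)).2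
    exact he.trans <| congrArg₂ (s(·, ·)) (expand_other' he hu (Finset.mem_compl.mp hv) e.2).symm
      (expand_other' (A := Aᶜ) (e := (π e).1) (he.trans Sym2.eq_swap) hv (by simpa) (π e).2).symm

end Decomposition

section MinimumCuts

variable {𝓑 𝓒 : Multigraph → Prop} {G : Multigraph} {A : Finset G.V}

lemma EdgeConnGe.reachIn_inner_compl (hmin : G.EdgeConnGe (G.cut A).card) (hA : A.Nonempty)
    (hcut : (G.cut A).Nonempty) {u v : G.V} (hu : u ∉ A) (hv : v ∉ A) :
    G.ReachIn (G.inner Aᶜ) u v := by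
  classical
  by_contra hreach
  -- Otherwise the cut at `A` is the disjoint union of two cuts that are at least as large.
  let C := Aᶜ.filter (G.ReachIn (G.inner Aᶜ) u)
  let D := Aᶜ.filter (¬ G.ReachIn (G.inner Aᶜ) u ·)
  have hsum : (G.cut A).card = (G.cut C).card + (G.cut D).card := by
    rw [← cut_compl, ← Finset.filter_union_filter_not_eq (G.ReachIn (G.inner Aᶜ) u) Aᶜ]
    refine card_cut_union (Finset.disjoint_filter_filter_not _ _ _) fun e x y he hx hy => ?_
    rw [Finset.mem_filter] at hx hy
    exact hy.2 (hx.2.trans (.single ((mem_inner_of_ends_eq he).mpr ⟨hx.1, hy.1⟩) he))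
  have hge : ∀ B ⊆ Aᶜ, B.Nonempty → (G.cut A).card ≤ (G.cut B).card := fun B hB hne =>
    hmin B hne fun huniv => by
      obtain ⟨a, ha⟩ := hA
      exact Finset.mem_compl.mp (hB (huniv ▸ Finset.mem_univ a)) ha
  have hC := hge C (Finset.filter_subset _ _)
    ⟨u, Finset.mem_filter.mpr ⟨Finset.mem_compl.mpr hu, .refl u⟩⟩
  have hD := hge D (Finset.filter_subset _ _)
    ⟨v, Finset.mem_filter.mpr ⟨Finset.mem_compl.mpr hv, hreach⟩⟩
  have hpos := hcut.card_pos
  lia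

lemma exists_edgeConnGe_card_cut_of_not_internally4EC (h : ¬ G.Internally4EC) :
    ∃ A : Finset G.V, A.Nonempty ∧ Aᶜ.Nonempty ∧ G.EdgeConnGe (G.cut A).card ∧
      ((G.cut A).card ≤ 2 ∨ (G.cut A).card = 3 ∧ A.card ≠ 1 ∧ Aᶜ.card ≠ 1) := by
  simp only [Finset.nonempty_iff_ne_empty (s := _ᶜ), ne_eq, Finset.compl_eq_empty_iff]
  by_cases h3 : G.EdgeConnGe 3
  · have h : ¬ ∀ A : Finset G.V, A.Nonempty → A ≠ Finset.univ →
        (G.cut A).card = 3 → A.card = 1 ∨ Aᶜ.card = 1 := fun h' => h ⟨h3, h'⟩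
    push Not at h
    obtain ⟨A, hA, huniv, hcut, hne⟩ := h
    exact ⟨A, hA, huniv, hcut ▸ h3, .inr ⟨hcut, hne⟩⟩
  · unfold EdgeConnGe at h3
    push Not at h3
    obtain ⟨B, hB, huniv, hlt⟩ := h3
    obtain ⟨A, hA, hmin⟩ := Finset.exists_min_image
      (Finset.univ.filter fun A : Finset G.V => A.Nonempty ∧ A ≠ Finset.univ)
      (fun A => (G.cut A).card) ⟨B, by simp [hB, huniv]⟩
    have hmin : G.EdgeConnGe (G.cut A).card := fun C hC hC' => hmin C (by simp [hC, hC'])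
    have hA := (Finset.mem_filter.mp hA).2
    exact ⟨A, hA.1, hA.2, hmin, .inl (Nat.le_of_lt_succ ((hmin B hB huniv).trans_lt hlt))⟩

lemma BuiltFrom.of_deg_eq_one_or_two
    (ih : ∀ G', Immerses G' G → Fintype.card G'.V < Fintype.card G.V → BuiltFrom 𝓑 G')
    {x : G.V} (hx : G.deg x = 1 ∨ G.deg x = 2) : BuiltFrom 𝓑 G := by
  obtain ⟨e₁, e₂, he⟩ : ∃ e₁ e₂, G.cut {x} = {e₁, e₂} := by
    rw [← card_cut_singleton, Finset.card_eq_one, Finset.card_eq_two] at hx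
    rcases hx with ⟨e, he⟩ | ⟨e₁, e₂, -, he⟩
    exacts [⟨e, e, by simp [he]⟩, ⟨e₁, e₂, he⟩]
  have hmem : ∀ e, x ∈ G.ends e ↔ e = e₁ ∨ e = e₂ := fun e => by
    simp [← mem_cut_singleton, he]
  obtain ⟨a, hax, h₁⟩ := exists_ends_of_mem ((hmem e₁).mpr (.inl rfl))
  obtain ⟨b, hbx, h₂⟩ := exists_ends_of_mem ((hmem e₂).mpr (.inr rfl))
  rw [Sym2.eq_swap] at h₁ h₂
  by_cases hab : a = b
  · refine .of_forall_ends_eq hax (fun e hxe => ?_) hx (ih _ (immerses_induce _ _) ?_)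
    · rcases (hmem e).mp hxe with rfl | rfl
      exacts [h₁, hab ▸ h₂]
    · rw [card_induce]
      exact Finset.card_lt_univ_of_notMem (x := x) (by simp)
  · have hx := fun e => (hmem e).mp
    refine .of_contract_compl_pair hab h₁ h₂ hx
      (ih _ (immerses_contract_compl_pair hab h₁ h₂ hx) ?_)
    rw [card_contract, ← Finset.card_compl_add_card {x, b}, Finset.card_pair hbx.symm]
    lia

lemma BuiltFrom.of_edgeConnGe_card_cut
    (ih : ∀ G', Immerses G' G → Fintype.card G'.V < Fintype.card G.V → BuiltFrom 𝓑 G')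
    (hA : 2 ≤ A.card) (hA' : 2 ≤ Aᶜ.card) (hmin : G.EdgeConnGe (G.cut A).card)
    (hcut : (G.cut A).Nonempty) (hcard : (G.cut A).card ≤ 3) : BuiltFrom 𝓑 G := by
  have hV := Finset.card_add_card_compl A
  have hne : A.Nonempty := Finset.card_pos.mp (by lia)
  have hne' : Aᶜ.Nonempty := Finset.card_pos.mp (by lia)
  refine .of_contract hA hA' hcard (ih _ ?_ ?_) (ih _ ?_ ?_)
  · exact immerses_contract_of_card_cut_le_three hcut hcard fun u v =>
      hmin.reachIn_inner_compl hne hcut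
  · rw [card_contract]
    lia
  · rw [← cut_compl] at hmin hcut hcard
    exact immerses_contract_of_card_cut_le_three hcut hcard fun u v =>
      hmin.reachIn_inner_compl hne' hcut
  · rw [card_contract]
    lia

lemma BuiltFrom.of_not_internally4EC
    (ih : ∀ G', Immerses G' G → Fintype.card G'.V < Fintype.card G.V → BuiltFrom 𝓑 G')
    (hG : ¬ G.Internally4EC) : BuiltFrom 𝓑 G := by
  obtain ⟨A, hA, hA', hmin, hcard⟩ := exists_edgeConnGe_card_cut_of_not_internally4EC hG
  have hApos := hA.card_pos
  have hApos' := hA'.card_pos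
  have hV := Finset.card_add_card_compl A
  rcases (G.cut A).eq_empty_or_nonempty with hcut | hcut
  · refine .of_cut_eq_empty hcut (ih _ (immerses_induce _ _) ?_) (ih _ (immerses_induce _ _) ?_) <;>
    · rw [card_induce]
      lia
  have hpos := hcut.card_pos
  by_cases hA₁ : A.card = 1
  · obtain ⟨x, rfl⟩ := Finset.card_eq_one.mp hA₁
    exact .of_deg_eq_one_or_two ih (x := x) (by rw [← card_cut_singleton]; lia)
  by_cases hA₁' : Aᶜ.card = 1
  · obtain ⟨x, hx⟩ := Finset.card_eq_one.mp hA₁'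
    exact .of_deg_eq_one_or_two ih (x := x) (by rw [← card_cut_singleton, ← hx, cut_compl]; lia)
  exact .of_edgeConnGe_card_cut ih (by lia) (by lia) hmin hcut (by lia)

theorem BuiltFrom.of_immersion_closed
    (h𝓒 : ∀ G₁ G₂, Immerses G₁ G₂ → 𝓒 G₂ → 𝓒 G₁) (hG : 𝓒 G) :
    BuiltFrom (fun B => B.Internally4EC ∧ 𝓒 B) G := by
  induction hn : Fintype.card G.V using Nat.strong_induction_on generalizing G with
  | _ n ih =>
    by_cases h4 : G.Internally4EC
    · exact .base G ⟨h4, hG⟩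
    · exact .of_not_internally4EC
        (fun G' him hlt => ih _ (hn ▸ hlt) (h𝓒 G' G him hG) rfl) h4

end MinimumCuts

lemma internally4EC_K33 : K33.Internally4EC := by
  unfold Internally4EC EdgeConnGe
  decide

end Multigraph

open Multigraph in
theorem k33_free_iff_built_general (H : Multigraph) (hH : H.Internally4EC) (G : Multigraph) :
    ¬ Immerses H G ↔ BuiltFrom (fun B => B.Internally4EC ∧ ¬ Immerses H B) G :=
  ⟨fun h => .of_immersion_closed (fun _ _ h₁₂ h₂ h₁ => h₂ (h₁.trans h₁₂)) h,
    fun h => h.not_immerses hH fun _ hB => hB.2⟩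

open Multigraph in
/-- A graph contains no `K_{3,3}` immersion if and only if it can be obtained
from internally 4-edge-connected `K_{3,3}`-immersion-free graphs by repeatedly
applying joins on vertices of degree at most three, disjoint unions, edge
subdivisions, and additions of pendant vertices joined by single or double
edges. -/
theorem k33_free_iff_built (G : Multigraph) :
    ¬ Immerses K33 G ↔ Built G :=
  (k33_free_iff_built_general K33 internally4EC_K33 G).trans built_iff_builtFrom.symm
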